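/- For every rational α ∈ (0,1/2) there exists a constant C_0(α) > 0 such that liminf_{N→∞} (1/N) ( E[ max_{σ ∈ S_N(α)} H_0(σ) ] − E[ max_{σ ∈ S_N(α)} H_1(σ) ] ) > C_0(α), where the liminf is over integers N with αN an integer. -/

import Mathlib

open Finset MeasureTheory ProbabilityTheory

noncomputable section

/-- The law of the independent Gaussian entries used to build a GOE matrix: a product of
centered real Gaussians indexed by pairs `(i,j)`, with variance `2` on the diagonal and `1`
off the diagonal.  (Only the coordinates with `i ≤ j` are ever read off, so this realizes a
GOE matrix: the entries `(J_{ij})_{i≤j}` are independent centered Gaussians with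
`Var(J_{ij}) = 1` for `i < j` and `Var(J_{ii}) = 2`.) -/
def goeMeasure (N : ℕ) : Measure ((Fin N × Fin N) → ℝ) :=
  Measure.pi fun p => gaussianReal 0 (if p.1 = p.2 then 2 else 1)

/-- The symmetric (GOE) matrix built from the sample `ω`. -/
def Jmat {N : ℕ} (ω : (Fin N × Fin N) → ℝ) (i j : Fin N) : ℝ :=
  if i ≤ j then ω (i, j) else ω (j, i)

/-- The value `±1` of a Boolean spin. -/
def spin (b : Bool) : ℝ := if b then 1 else -1

/-- The configuration space `S_N(α) = {σ ∈ {−1,1}^N : ∑ᵢ σᵢ = N(2α−1)}`. -/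
def SNset (N : ℕ) (α : ℚ) : Set (Fin N → Bool) :=
  {σ | ∑ i, spin (σ i) = (N : ℝ) * (2 * (α : ℝ) - 1)}

open Classical in
/-- `S_N(α)` as a finite set. -/
def SNfinset (N : ℕ) (α : ℚ) : Finset (Fin N → Bool) :=
  Finset.univ.filter fun σ => ∑ i, spin (σ i) = (N : ℝ) * (2 * (α : ℝ) - 1)

/-- `H_0(σ) = N^{-1/2} ∑_{i,j} J_{ij} σ_i σ_j`. -/
def H0 {N : ℕ} (ω : (Fin N × Fin N) → ℝ) (σ : Fin N → Bool) : ℝ :=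
  (Real.sqrt N)⁻¹ * ∑ i, ∑ j, Jmat ω i j * spin (σ i) * spin (σ j)

/-- `g_i = N^{-1/2} ∑_j J_{ij}`. -/
def gvec {N : ℕ} (ω : (Fin N × Fin N) → ℝ) (i : Fin N) : ℝ :=
  (Real.sqrt N)⁻¹ * ∑ j, Jmat ω i j

/-- `H_1(σ) = H_0(σ) − 2(2α−1) ∑ᵢ gᵢ σᵢ + (2α−1)² N^{-1/2} ∑_{i,j} J_{ij}`. -/
def H1 {N : ℕ} (α : ℚ) (ω : (Fin N × Fin N) → ℝ) (σ : Fin N → Bool) : ℝ :=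
  H0 ω σ - 2 * (2 * (α : ℝ) - 1) * ∑ i, gvec ω i * spin (σ i)
    + (2 * (α : ℝ) - 1) ^ 2 * ((Real.sqrt N)⁻¹ * ∑ i, ∑ j, Jmat ω i j)

/-- `E[max_{σ ∈ S_N(α)} H(σ)]`, the expectation over the GOE matrix of the maximum of a
Hamiltonian `H` over the configuration space `S_N(α)`. -/
def Emax (N : ℕ) (α : ℚ) (H : ((Fin N × Fin N) → ℝ) → (Fin N → Bool) → ℝ) : ℝ :=
  ∫ ω, sSup ((H ω) '' SNset N α) ∂(goeMeasure N)

end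

/-- `α N` is a (nonnegative) integer. -/
def alphaIntegral (α : ℚ) (N : ℕ) : Prop := ∃ k : ℕ, α * (N : ℚ) = (k : ℚ)

/-!
Writing `m = 2α - 1`, both Hamiltonians are values of the quadratic form
`Q(u) = N^{-1/2} ∑ᵢⱼ Jᵢⱼ uᵢ uⱼ`: `H₀(σ) = Q(σ)` and `H₁(σ) = Q(σ - m)`, and
`Cov(Q(u), Q(w)) = (2/N) ⟨u, w⟩²`. On `S_N(α)` one has `⟨σ - m, τ - m⟩ = ⟨σ, τ⟩ - N m²`, so with
`q² = 1 - m² < 1` the increments satisfy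
`q² E(H₀(σ) - H₀(τ))² - E(H₁(σ) - H₁(τ))² = (4/N) m² (N - ⟨σ, τ⟩)² ≥ 0`,
and the Sudakov–Fernique inequality gives `E max H₁ ≤ q E max H₀`. It remains to see that
`E max H₀` is of order `N`: the configurations `(s, -s, -1, …, -1)` with `s ∈ {-1, 1}^{αN}` lie
in `S_N(α)`, and on them the increments of `H₀` dominate those of `c ∑ᵢ zᵢ sᵢ` with `zᵢ` independent
standard Gaussians and `c² = 8 (1 - 2α)`, whose maximum over `s` has mean `c αN E|z|`.

Sudakov–Fernique is proved by Gaussian interpolation: along `cos θ X + sin θ Y` the expectation of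
the log-sum-exp function is monotone in `θ` by integration by parts, and rescaling the processes
makes the difference between log-sum-exp and the maximum negligible.
-/

open scoped NNReal

section GaussianIntegrationByParts

theorem hasDerivAt_gaussianPDFReal (μ : ℝ) (v : ℝ≥0) (x : ℝ) :
    HasDerivAt (gaussianPDFReal μ v) (-((x - μ) / v) * gaussianPDFReal μ v x) x := by
  have h_exponent : HasDerivAt (fun y : ℝ => -(y - μ) ^ 2 / (2 * v)) (-((x - μ) / v)) x := by
    convert! ((((hasDerivAt_id x).sub_const μ).pow 2).neg.div_const (2 * (v : ℝ))) using 1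
    simp only [id_eq, Nat.cast_ofNat, Nat.add_one_sub_one, pow_one, mul_one]
    field_simp
  rw [gaussianPDFReal_def]
  convert! h_exponent.exp.const_mul ((√(2 * Real.pi * v))⁻¹) using 1
  ring

theorem integrable_gaussianReal_iff {μ : ℝ} {v : ℝ≥0} (hv : v ≠ 0) {f : ℝ → ℝ} :
    Integrable f (gaussianReal μ v) ↔ Integrable fun x => gaussianPDFReal μ v x * f x := by
  rw [gaussianReal_of_var_ne_zero μ hv, integrable_withDensity_iff_integrable_smul'
    (measurable_gaussianPDF μ v) (ae_of_all _ fun _ => gaussianPDF_lt_top)]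
  simp only [toReal_gaussianPDF, smul_eq_mul]

theorem integral_sub_mean_mul_gaussianReal {μ : ℝ} {v : ℝ≥0} {f f' : ℝ → ℝ}
    (hf : ∀ x, HasDerivAt f (f' x) x) (hf_int : Integrable f (gaussianReal μ v))
    (hf'_int : Integrable f' (gaussianReal μ v))
    (hxf_int : Integrable (fun x => (x - μ) * f x) (gaussianReal μ v)) :
    ∫ x, (x - μ) * f x ∂gaussianReal μ v = v * ∫ x, f' x ∂gaussianReal μ v := by
  rcases eq_or_ne v 0 with rfl | hv
  · simp
  have hv' : (v : ℝ) ≠ 0 := by exact_mod_cast hv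
  rw [integrable_gaussianReal_iff hv] at hf_int hf'_int hxf_int
  have h_density (x : ℝ) : gaussianPDFReal μ v x * ((x - μ) * f x)
      = -v * (f x * (-((x - μ) / v) * gaussianPDFReal μ v x)) := by
    field_simp
  have h_parts := integral_mul_deriv_eq_deriv_mul_of_integrable (u := f)
    (v := gaussianPDFReal μ v) (fun x _ => hf x)
    (fun x _ => hasDerivAt_gaussianPDFReal μ v x)
    ((hxf_int.const_mul (-(v : ℝ)⁻¹)).congr (ae_of_all _ fun x => by
      simp only [Pi.mul_apply, h_density]; field_simp))
    (hf'_int.congr (ae_of_all _ fun x => mul_comm _ _))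
    (hf_int.congr (ae_of_all _ fun x => mul_comm _ _))
  simp only [integral_gaussianReal_eq_integral_smul hv, smul_eq_mul, h_density]
  rw [integral_const_mul, h_parts]
  simp only [mul_comm (gaussianPDFReal μ v _), neg_mul_neg]

variable {E : Type*} [NormedAddCommGroup E] [NormedSpace ℝ E] [MeasurableSpace E] [BorelSpace E]
  [SecondCountableTopology E] {f : E → ℝ} {f' : E → E →L[ℝ] ℝ} {C C' : ℝ}

theorem integral_fst_mul_comp_add_smul_gaussianReal_prod (v : ℝ≥0) (ν : Measure E)
    [IsProbabilityMeasure ν] (c : E) (hf : ∀ z, HasFDerivAt f (f' z) z) (hf' : Continuous f')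
    (hC : ∀ z, ‖f z‖ ≤ C) (hC' : ∀ z, ‖f' z‖ ≤ C') :
    ∫ p, p.1 * f (p.2 + p.1 • c) ∂(gaussianReal 0 v).prod ν
      = v * ∫ p, f' (p.2 + p.1 • c) c ∂(gaussianReal 0 v).prod ν := by
  have hf_cont : Continuous f := continuous_iff_continuousAt.2 fun z => (hf z).continuousAt
  have h_line (r : E) (x : ℝ) :
      HasDerivAt (fun x : ℝ => f (r + x • c)) (f' (r + x • c) c) x := by
    simpa using! (hf _).comp_hasDerivAt x (((hasDerivAt_id x).smul_const c).const_add r)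
  have hC'_apply (z : E) : ‖f' z c‖ ≤ C' * ‖c‖ :=
    (f' z).le_of_opNorm_le (hC' z) c
  have h_id : Integrable (fun x : ℝ => x) (gaussianReal 0 v) :=
    memLp_one_iff_integrable.1 (memLp_id_gaussianReal 1)
  rw [integral_prod_symm, integral_prod_symm, ← integral_const_mul]
  · refine integral_congr_ae (ae_of_all _ fun r => ?_)
    have h_stein := integral_sub_mean_mul_gaussianReal (μ := 0) (v := v) (h_line r)
      (.of_bound (by fun_prop) C (ae_of_all _ fun x => hC _))
      (.of_bound (by fun_prop) (C' * ‖c‖) (ae_of_all _ fun x => hC'_apply _))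
      (by simpa only [sub_zero] using!
        h_id.mul_bdd (c := C) (by fun_prop) (ae_of_all _ fun x => hC _))
    simpa only [sub_zero] using h_stein
  · exact .of_bound (by fun_prop) (C' * ‖c‖) (ae_of_all _ fun p => hC'_apply _)
  · exact (h_id.comp_fst ν).mul_bdd (c := C) (by fun_prop) (ae_of_all _ fun p => hC _)

variable {Ω : Type*} {mΩ : MeasurableSpace Ω} {P : Measure Ω}

theorem integral_mul_comp_add_smul_of_indepFun {W : Ω → ℝ} {R : Ω → E} (hW : HasGaussianLaw W P)
    (hW_mean : P[W] = 0) (hR : AEMeasurable R P) (hWR : IndepFun W R P) (c : E)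
    (hf : ∀ z, HasFDerivAt f (f' z) z) (hf' : Continuous f')
    (hC : ∀ z, ‖f z‖ ≤ C) (hC' : ∀ z, ‖f' z‖ ≤ C') :
    ∫ ω, W ω * f (R ω + W ω • c) ∂P = Var[W; P] * ∫ ω, f' (R ω + W ω • c) c ∂P := by
  have := hW.isProbabilityMeasure
  have := Measure.isProbabilityMeasure_map hR
  have hf_cont : Continuous f := continuous_iff_continuousAt.2 fun z => (hf z).continuousAt
  have h_law : P.map (fun ω => (W ω, R ω))
      = (gaussianReal 0 Var[W; P].toNNReal).prod (P.map R) := by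
    rw [(indepFun_iff_map_prod_eq_prod_map_map hW.aemeasurable hR).1 hWR,
      hW.map_eq_gaussianReal, hW_mean]
  have h_stein := integral_fst_mul_comp_add_smul_gaussianReal_prod Var[W; P].toNNReal (P.map R) c
    hf hf' hC hC'
  have h_meas := hW.aemeasurable.prodMk hR
  rw [← h_law, integral_map h_meas (Continuous.aestronglyMeasurable (by fun_prop)),
    integral_map h_meas (Continuous.aestronglyMeasurable (by fun_prop)),
    Real.coe_toNNReal _ (variance_nonneg W P)] at h_stein
  exact h_stein

theorem covariance_eq_zero_of_variance_eq_zero [IsFiniteMeasure P] {X Y : Ω → ℝ}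
    (hX : MemLp X 2 P) (h : Var[X; P] = 0) : cov[X, Y; P] = 0 := by
  have h_ae : ∀ᵐ ω ∂P, (X ω - P[X]) * (Y ω - P[Y]) = 0 := by
    filter_upwards [ae_eq_integral_of_variance_eq_zero hX h] with ω hω
    simp [hω]
  exact integral_eq_zero_of_ae h_ae

variable {ι : Type*} {W : Ω → ℝ} {Z : ι → Ω → ℝ}

theorem hasGaussianLaw_prodMk_sub_mul [Finite ι]
    (hWZ : HasGaussianLaw (fun ω => (W ω, fun i => Z i ω)) P) (c : ι → ℝ) :
    HasGaussianLaw (fun ω => (W ω, fun i => Z i ω - c i * W ω)) P := by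
  have := Fintype.ofFinite ι
  let shear : ℝ × (ι → ℝ) →L[ℝ] ℝ × (ι → ℝ) :=
    .prod (.fst ℝ ℝ _) (.pi fun i => .proj i ∘L .snd ℝ ℝ _ - c i • .fst ℝ ℝ _)
  exact hWZ.map_fun shear

theorem indepFun_sub_covariance_div_variance_mul [Finite ι]
    (hWZ : HasGaussianLaw (fun ω => (W ω, fun i => Z i ω)) P) :
    IndepFun W (fun ω i => Z i ω - cov[W, Z i; P] / Var[W; P] * W ω) P := by
  have := Fintype.ofFinite ι
  have := hWZ.isProbabilityMeasure
  have hW := hWZ.fst.memLp_two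
  have h_joint := (hasGaussianLaw_prodMk_sub_mul hWZ fun i => cov[W, Z i; P] / Var[W; P]).map_fun
    ((ContinuousLinearMap.pi fun _ : Unit => .id ℝ ℝ).prodMap (.id ℝ (ι → ℝ)))
  refine (h_joint.indepFun_of_covariance_eval (X := fun _ => W)
    (Y := fun i ω => Z i ω - cov[W, Z i; P] / Var[W; P] * W ω) fun _ i => ?_).comp
    (measurable_pi_apply ()) measurable_id
  rw [covariance_fun_sub_right hW (hWZ.snd.eval i).memLp_two (hW.const_mul _),
    covariance_const_mul_right, covariance_self hWZ.fst.aemeasurable,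
    div_mul_cancel_of_imp (covariance_eq_zero_of_variance_eq_zero hW), sub_self]

theorem integral_mul_comp_eq_integral_fderiv_covariance [Fintype ι] {f : (ι → ℝ) → ℝ}
    {f' : (ι → ℝ) → (ι → ℝ) →L[ℝ] ℝ}
    (hWZ : HasGaussianLaw (fun ω => (W ω, fun i => Z i ω)) P) (hW_mean : P[W] = 0)
    (hf : ∀ z, HasFDerivAt f (f' z) z) (hf' : Continuous f')
    (hC : ∀ z, ‖f z‖ ≤ C) (hC' : ∀ z, ‖f' z‖ ≤ C') :
    ∫ ω, W ω * f (fun i => Z i ω) ∂P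
      = ∫ ω, f' (fun i => Z i ω) (fun i => cov[W, Z i; P]) ∂P := by
  have := hWZ.isProbabilityMeasure
  have h_direction (z : ι → ℝ) : Var[W; P] * f' z (fun i => cov[W, Z i; P] / Var[W; P])
      = f' z (fun i => cov[W, Z i; P]) := by
    rw [← smul_eq_mul, ← map_smul]
    congr 1 with i
    exact mul_div_cancel_of_imp' (covariance_eq_zero_of_variance_eq_zero hWZ.fst.memLp_two)
  have h_split (ω : Ω) : (fun i => Z i ω - cov[W, Z i; P] / Var[W; P] * W ω)
      + W ω • (fun i => cov[W, Z i; P] / Var[W; P]) = fun i => Z i ω := by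
    ext i
    simp only [Pi.add_apply, Pi.smul_apply, smul_eq_mul]
    ring
  have h_parts := integral_mul_comp_add_smul_of_indepFun hWZ.fst hW_mean
    (hasGaussianLaw_prodMk_sub_mul hWZ _).snd.aemeasurable
    (indepFun_sub_covariance_div_variance_mul hWZ)
    (fun i => cov[W, Z i; P] / Var[W; P]) hf hf' hC hC'
  simpa only [h_split, ← integral_const_mul, h_direction] using h_parts

end GaussianIntegrationByParts

section Softmax

variable {S : Type*} [Fintype S]

/-- The log-sum-exp function `log ∑ₐ exp zₐ`, a smooth approximation of the maximum. -/
noncomputable def logSumExp (z : S → ℝ) : ℝ := Real.log (∑ a, Real.exp (z a))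

/-- The softmax weights, i.e. the Gibbs probability weights proportional to `exp zₐ`. -/
noncomputable def softmax (z : S → ℝ) (a : S) : ℝ := Real.exp (z a) / ∑ b, Real.exp (z b)

/-- The average of a function on `S` under the softmax weights of `z`, as a continuous linear
functional; it is the derivative of `logSumExp` at `z`. -/
noncomputable def gibbsMean (z : S → ℝ) : (S → ℝ) →L[ℝ] ℝ := ∑ a, softmax z a • .proj a

/-- The derivative at `z` of the softmax weight of `a`. -/
noncomputable def softmaxFDeriv (a : S) (z : S → ℝ) : (S → ℝ) →L[ℝ] ℝ :=
  softmax z a • (.proj a - gibbsMean z)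

theorem gibbsMean_apply (z w : S → ℝ) : gibbsMean z w = ∑ a, softmax z a * w a := by
  simp [gibbsMean]

theorem softmaxFDeriv_apply (a : S) (z w : S → ℝ) :
    softmaxFDeriv a z w = softmax z a * (w a - gibbsMean z w) := rfl

theorem half_sum_mul_mul_eq_sum_mul_sub {p : S → ℝ} (hp : ∑ a, p a = 1) (C : S → S → ℝ) :
    1 / 2 * ∑ a, ∑ b, p a * p b * (C a a + C b b - 2 * C a b)
      = ∑ a, p a * (C a a - ∑ b, p b * C a b) := by
  have h_left : ∑ a, ∑ b, p a * p b * C a a = ∑ a, p a * C a a := by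
    simp only [mul_right_comm (p _) (p _), ← mul_sum, hp, mul_one]
  have h_right : ∑ a, ∑ b, p a * p b * C b b = ∑ a, p a * C a a := by
    rw [sum_comm]
    simp only [mul_assoc, ← sum_mul, hp, one_mul]
  have h_cross : ∑ a, p a * ∑ b, p b * C a b = ∑ a, ∑ b, p a * p b * C a b := by
    simp only [mul_sum, mul_assoc]
  have h_expand : ∑ a, ∑ b, p a * p b * (C a a + C b b - 2 * C a b)
      = ∑ a, ∑ b, p a * p b * C a a + ∑ a, ∑ b, p a * p b * C b b
        - 2 * ∑ a, ∑ b, p a * p b * C a b := by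
    simp only [mul_sum, ← sum_add_distrib, ← sum_sub_distrib]
    exact sum_congr rfl fun a _ => sum_congr rfl fun b _ => by ring
  rw [h_expand, h_left, h_right, ← h_cross]
  simp only [mul_sub, sum_sub_distrib]
  ring

theorem abs_iSup_le_sum_abs [Nonempty S] (z : S → ℝ) : |⨆ a, z a| ≤ ∑ a, |z a| := by
  obtain ⟨a, ha⟩ := exists_eq_ciSup_of_finite (f := z)
  rw [← ha]
  exact single_le_sum (f := fun b => |z b|) (fun b _ => abs_nonneg _) (mem_univ a)

variable [Nonempty S]

theorem sum_exp_pos (z : S → ℝ) : 0 < ∑ a, Real.exp (z a) :=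
  sum_pos (fun _ _ => Real.exp_pos _) univ_nonempty

theorem softmax_nonneg (z : S → ℝ) (a : S) : 0 ≤ softmax z a :=
  div_nonneg (Real.exp_pos _).le (sum_exp_pos z).le

theorem sum_softmax (z : S → ℝ) : ∑ a, softmax z a = 1 := by
  simp only [softmax, ← sum_div, div_self (sum_exp_pos z).ne']

theorem softmax_le_one (z : S → ℝ) (a : S) : softmax z a ≤ 1 := by
  rw [← sum_softmax z]
  exact single_le_sum (fun b _ => softmax_nonneg z b) (mem_univ a)

theorem softmax_eq_exp_sub_logSumExp (z : S → ℝ) (a : S) :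
    softmax z a = Real.exp (z a - logSumExp z) := by
  rw [Real.exp_sub, logSumExp, Real.exp_log (sum_exp_pos z), softmax]

theorem hasFDerivAt_logSumExp (z : S → ℝ) : HasFDerivAt logSumExp (gibbsMean z) z := by
  convert! (HasFDerivAt.fun_sum fun a (_ : a ∈ univ) =>
    (hasFDerivAt_apply (𝕜 := ℝ) a z).exp).log (sum_exp_pos z).ne' using 1
  simp only [gibbsMean, softmax, smul_sum, smul_smul, div_eq_inv_mul]

theorem hasFDerivAt_softmax (a : S) (z : S → ℝ) :
    HasFDerivAt (fun z => softmax z a) (softmaxFDeriv a z) z := by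
  simp only [softmaxFDeriv, softmax_eq_exp_sub_logSumExp]
  exact ((hasFDerivAt_apply a z).sub (hasFDerivAt_logSumExp z)).exp

theorem continuous_logSumExp : Continuous (logSumExp : (S → ℝ) → ℝ) :=
  continuous_iff_continuousAt.2 fun z => (hasFDerivAt_logSumExp z).continuousAt

theorem continuous_softmax (a : S) : Continuous fun z : S → ℝ => softmax z a :=
  continuous_iff_continuousAt.2 fun z => (hasFDerivAt_softmax a z).continuousAt

theorem continuous_gibbsMean : Continuous (gibbsMean : (S → ℝ) → (S → ℝ) →L[ℝ] ℝ) :=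
  continuous_finsetSum _ fun a _ => (continuous_softmax a).smul continuous_const

theorem norm_gibbsMean_le (z : S → ℝ) : ‖gibbsMean z‖ ≤ 1 := by
  refine ContinuousLinearMap.opNorm_le_bound _ zero_le_one fun w => ?_
  rw [gibbsMean_apply, ← sum_softmax z, sum_mul]
  refine norm_sum_le_of_le _ fun a _ => ?_
  rw [norm_mul, Real.norm_of_nonneg (softmax_nonneg z a)]
  exact mul_le_mul_of_nonneg_left (norm_le_pi_norm w a) (softmax_nonneg z a)

theorem continuous_softmaxFDeriv (a : S) : Continuous (softmaxFDeriv a) :=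
  (continuous_softmax a).smul (continuous_const.sub continuous_gibbsMean)

theorem norm_softmax_le (z : S → ℝ) (a : S) : ‖softmax z a‖ ≤ 1 := by
  rw [Real.norm_of_nonneg (softmax_nonneg z a)]
  exact softmax_le_one z a

theorem norm_softmaxFDeriv_le (a : S) (z : S → ℝ) : ‖softmaxFDeriv a z‖ ≤ 2 := by
  have h_proj : ‖ContinuousLinearMap.proj (R := ℝ) (φ := fun _ : S => ℝ) a‖ ≤ 1 :=
    ContinuousLinearMap.opNorm_le_bound _ zero_le_one fun w => by
      simpa using norm_le_pi_norm w a
  calc ‖softmaxFDeriv a z‖ ≤ 1 * (1 + 1) := by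
        rw [softmaxFDeriv, norm_smul]
        gcongr
        · exact norm_softmax_le z a
        · exact (norm_sub_le _ _).trans (add_le_add h_proj (norm_gibbsMean_le z))
    _ = 2 := by norm_num

theorem iSup_le_logSumExp (z : S → ℝ) : ⨆ a, z a ≤ logSumExp z :=
  ciSup_le fun a => (Real.le_log_iff_exp_le (sum_exp_pos z)).2 <|
    single_le_sum (f := fun b => Real.exp (z b)) (fun _ _ => (Real.exp_pos _).le) (mem_univ a)

theorem logSumExp_le_iSup_add_log_card (z : S → ℝ) :
    logSumExp z ≤ (⨆ a, z a) + Real.log (Fintype.card S) := by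
  have h_card : (0 : ℝ) < Fintype.card S := Nat.cast_pos.2 Fintype.card_pos
  rw [logSumExp, Real.log_le_iff_le_exp (sum_exp_pos z), Real.exp_add, Real.exp_log h_card]
  calc ∑ a, Real.exp (z a) ≤ ∑ _a : S, Real.exp (⨆ a, z a) := by
        gcongr with a
        exact le_ciSup (Set.finite_range z).bddAbove a
    _ = Real.exp (⨆ a, z a) * Fintype.card S := by simp [mul_comm]

theorem abs_logSumExp_le (z : S → ℝ) :
    |logSumExp z| ≤ (∑ a, |z a|) + Real.log (Fintype.card S) := by
  have h_lower := iSup_le_logSumExp z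
  have h_upper := logSumExp_le_iSup_add_log_card z
  have h_sup := abs_le.1 (abs_iSup_le_sum_abs z)
  have := Real.log_natCast_nonneg (Fintype.card S)
  exact abs_le.2 ⟨by linarith, by linarith⟩

end Softmax

section GaussianRotation

variable {Ω : Type*} {mΩ : MeasurableSpace Ω} {P : Measure Ω} {S : Type*}

/-- The Gaussian interpolation `cos θ • X + sin θ • Y` between two families of random variables. -/
noncomputable def gaussianRotation (X Y : S → Ω → ℝ) (θ : ℝ) (a : S) (ω : Ω) : ℝ :=
  Real.cos θ * X a ω + Real.sin θ * Y a ω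

theorem hasDerivAt_gaussianRotation (X Y : S → Ω → ℝ) (θ : ℝ) (a : S) (ω : Ω) :
    HasDerivAt (fun θ => gaussianRotation X Y θ a ω)
      (gaussianRotation X Y (θ + Real.pi / 2) a ω) θ := by
  simp only [gaussianRotation, Real.cos_add_pi_div_two, Real.sin_add_pi_div_two]
  exact ((Real.hasDerivAt_cos θ).mul_const _).add ((Real.hasDerivAt_sin θ).mul_const _)

theorem abs_gaussianRotation_le (X Y : S → Ω → ℝ) (θ : ℝ) (a : S) (ω : Ω) :
    |gaussianRotation X Y θ a ω| ≤ |X a ω| + |Y a ω| := by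
  refine (abs_add_le _ _).trans (add_le_add ?_ ?_) <;> rw [abs_mul]
  · exact mul_le_of_le_one_left (abs_nonneg _) (Real.abs_cos_le_one θ)
  · exact mul_le_of_le_one_left (abs_nonneg _) (Real.abs_sin_le_one θ)

variable {X Y : S → Ω → ℝ}

theorem integral_gaussianRotation (hX : ∀ a, Integrable (X a) P) (hY : ∀ a, Integrable (Y a) P)
    (hX_mean : ∀ a, P[X a] = 0) (hY_mean : ∀ a, P[Y a] = 0) (θ : ℝ) (a : S) :
    P[gaussianRotation X Y θ a] = 0 := by
  simp only [gaussianRotation]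
  rw [integral_add ((hX a).const_mul _) ((hY a).const_mul _), integral_const_mul,
    integral_const_mul, hX_mean, hY_mean, mul_zero, mul_zero, add_zero]

theorem covariance_gaussianRotation [IsProbabilityMeasure P] (hX : ∀ a, MemLp (X a) 2 P)
    (hY : ∀ a, MemLp (Y a) 2 P) (hXY : ∀ a b, cov[X a, Y b; P] = 0) (θ' θ : ℝ) (a b : S) :
    cov[gaussianRotation X Y θ' a, gaussianRotation X Y θ b; P]
      = Real.cos θ' * Real.cos θ * cov[X a, X b; P]
        + Real.sin θ' * Real.sin θ * cov[Y a, Y b; P] := by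
  have h_split (θ : ℝ) (a : S) : gaussianRotation X Y θ a
      = (fun ω => Real.cos θ * X a ω) + fun ω => Real.sin θ * Y a ω := rfl
  have hX' (θ : ℝ) (a : S) := (hX a).const_mul (Real.cos θ)
  have hY' (θ : ℝ) (a : S) := (hY a).const_mul (Real.sin θ)
  rw [h_split, h_split, covariance_add_left (hX' θ' a) (hY' θ' a) ((hX' θ b).add (hY' θ b)),
    covariance_add_right (hX' θ' a) (hX' θ b) (hY' θ b),
    covariance_add_right (hY' θ' a) (hX' θ b) (hY' θ b)]
  simp only [covariance_const_mul_left, covariance_const_mul_right, hXY,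
    covariance_comm (Y _) (X _)]
  ring

theorem hasGaussianLaw_gaussianRotation_prodMk [Finite S]
    (hXY : HasGaussianLaw (fun ω => ((fun a => X a ω), fun a => Y a ω)) P) (θ' θ : ℝ) (a : S) :
    HasGaussianLaw
      (fun ω => (gaussianRotation X Y θ' a ω, fun b => gaussianRotation X Y θ b ω)) P := by
  have := Fintype.ofFinite S
  let rotate (θ : ℝ) (a : S) : (S → ℝ) × (S → ℝ) →L[ℝ] ℝ :=
    Real.cos θ • .proj a ∘L .fst ℝ _ _ + Real.sin θ • .proj a ∘L .snd ℝ _ _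
  exact hXY.map_fun ((rotate θ' a).prod (.pi (rotate θ)))

variable [Fintype S] [Nonempty S]

theorem integral_gibbsMean_eq_integral_covariance {V Z : S → Ω → ℝ}
    (hVZ : ∀ a, HasGaussianLaw (fun ω => (V a ω, fun b => Z b ω)) P) (hV : ∀ a, P[V a] = 0) :
    ∫ ω, gibbsMean (fun b => Z b ω) (fun a => V a ω) ∂P
      = ∫ ω, 1 / 2 * ∑ a, ∑ b, softmax (fun c => Z c ω) a * softmax (fun c => Z c ω) b
          * (cov[V a, Z a; P] + cov[V b, Z b; P] - 2 * cov[V a, Z b; P]) ∂P := by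
  have := (hVZ (Classical.arbitrary S)).isProbabilityMeasure
  have hZ : AEMeasurable (fun ω b => Z b ω) P := (hVZ (Classical.arbitrary S)).snd.aemeasurable
  have h_parts (a : S) := integral_mul_comp_eq_integral_fderiv_covariance (hVZ a) (hV a)
    (hasFDerivAt_softmax a) (continuous_softmaxFDeriv a) (norm_softmax_le · a)
    (norm_softmaxFDeriv_le a)
  have h_identity (z : S → ℝ) : 1 / 2 * ∑ a, ∑ b, softmax z a * softmax z b
        * (cov[V a, Z a; P] + cov[V b, Z b; P] - 2 * cov[V a, Z b; P])
      = ∑ a, softmaxFDeriv a z fun b => cov[V a, Z b; P] := by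
    simp only [half_sum_mul_mul_eq_sum_mul_sub (sum_softmax z) fun a b => cov[V a, Z b; P],
      softmaxFDeriv_apply, gibbsMean_apply]
  simp only [h_identity, gibbsMean_apply, mul_comm (softmax _ _) (V _ _)]
  rw [integral_finsetSum, integral_finsetSum]
  · exact sum_congr rfl fun a _ => h_parts a
  · exact fun a _ => .of_bound
      (((continuous_softmaxFDeriv a).clm_apply continuous_const).comp_aestronglyMeasurable
        hZ.aestronglyMeasurable) _
      (ae_of_all _ fun ω => ContinuousLinearMap.le_of_opNorm_le _ (norm_softmaxFDeriv_le a _) _)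
  · exact fun a _ => (hVZ a).fst.integrable.mul_bdd
      ((continuous_softmax a).comp_aestronglyMeasurable hZ.aestronglyMeasurable)
      (ae_of_all _ fun ω => norm_softmax_le _ a)

end GaussianRotation

section GaussianComparison

variable {Ω : Type*} {mΩ : MeasurableSpace Ω} {P : Measure Ω} {S : Type*} [Fintype S] [Nonempty S]
  {X Y : S → Ω → ℝ}

theorem integrable_logSumExp [IsFiniteMeasure P] (hX : ∀ a, Integrable (X a) P) :
    Integrable (fun ω => logSumExp fun a => X a ω) P := by
  refine ((integrable_finsetSum univ fun a _ => (hX a).abs).add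
    (integrable_const (Real.log (Fintype.card S)))).mono'
    (continuous_logSumExp.comp_aestronglyMeasurable
      (aemeasurable_pi_lambda _ fun a => (hX a).aemeasurable).aestronglyMeasurable)
    (ae_of_all _ fun ω => abs_logSumExp_le _)

theorem hasDerivAt_integral_logSumExp_gaussianRotation [IsFiniteMeasure P]
    (hX : ∀ a, Integrable (X a) P) (hY : ∀ a, Integrable (Y a) P) (θ : ℝ) :
    HasDerivAt (fun θ => ∫ ω, logSumExp (fun a => gaussianRotation X Y θ a ω) ∂P)
      (∫ ω, gibbsMean (fun a => gaussianRotation X Y θ a ω)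
        (fun a => gaussianRotation X Y (θ + Real.pi / 2) a ω) ∂P) θ := by
  have h_rot (θ : ℝ) (a : S) : Integrable (gaussianRotation X Y θ a) P :=
    ((hX a).const_mul _).add ((hY a).const_mul _)
  have h_meas (θ : ℝ) : AEStronglyMeasurable (fun ω a => gaussianRotation X Y θ a ω) P :=
    (aemeasurable_pi_lambda _ fun a => (h_rot θ a).aemeasurable).aestronglyMeasurable
  refine (hasDerivAt_integral_of_dominated_loc_of_deriv_le
    (bound := fun ω => ∑ a, (|X a ω| + |Y a ω|))
    (F' := fun θ ω => gibbsMean (fun a => gaussianRotation X Y θ a ω)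
        (fun a => gaussianRotation X Y (θ + Real.pi / 2) a ω)) Filter.univ_mem
    (.of_forall fun θ => (integrable_logSumExp (h_rot θ)).aestronglyMeasurable)
    (integrable_logSumExp (h_rot θ)) ?_ ?_ ?_ ?_).2
  · exact ((continuous_gibbsMean.comp continuous_fst).clm_apply
      continuous_snd).comp_aestronglyMeasurable ((h_meas θ).prodMk (h_meas _))
  · refine ae_of_all _ fun ω θ _ => ?_
    rw [gibbsMean_apply]
    refine norm_sum_le_of_le _ fun a _ => ?_
    rw [norm_mul]
    exact (mul_le_of_le_one_left (norm_nonneg _) (norm_softmax_le _ a)).trans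
      (abs_gaussianRotation_le X Y _ a ω)
  · exact integrable_finsetSum _ fun a _ => (hX a).abs.add (hY a).abs
  · refine ae_of_all _ fun ω θ _ => ?_
    have h_path : HasDerivAt (fun θ a => gaussianRotation X Y θ a ω)
        (fun a => gaussianRotation X Y (θ + Real.pi / 2) a ω) θ :=
      hasDerivAt_pi.2 fun a => hasDerivAt_gaussianRotation X Y θ a ω
    exact (hasFDerivAt_logSumExp _).comp_hasDerivAt θ h_path

theorem integral_gibbsMean_gaussianRotation_nonneg
    (hXY : HasGaussianLaw (fun ω => ((fun a => X a ω), fun a => Y a ω)) P)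
    (hX_mean : ∀ a, P[X a] = 0) (hY_mean : ∀ a, P[Y a] = 0) (h_cross : ∀ a b, cov[X a, Y b; P] = 0)
    (h_var : ∀ a b, Var[fun ω => X a ω - X b ω; P] ≤ Var[fun ω => Y a ω - Y b ω; P])
    {θ : ℝ} (hθ : θ ∈ Set.Icc 0 (Real.pi / 2)) :
    0 ≤ ∫ ω, gibbsMean (fun a => gaussianRotation X Y θ a ω)
        (fun a => gaussianRotation X Y (θ + Real.pi / 2) a ω) ∂P := by
  have := hXY.isProbabilityMeasure
  have hX (a : S) := hXY.fst.eval a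
  have hY (a : S) := hXY.snd.eval a
  rw [integral_gibbsMean_eq_integral_covariance (V := gaussianRotation X Y (θ + Real.pi / 2))
    (Z := gaussianRotation X Y θ) (hasGaussianLaw_gaussianRotation_prodMk hXY _ _)
    (integral_gaussianRotation (fun a => (hX a).integrable) (fun a => (hY a).integrable)
      hX_mean hY_mean _)]
  have h_increment (a b : S) : 0 ≤
      cov[gaussianRotation X Y (θ + Real.pi / 2) a, gaussianRotation X Y θ a; P]
      + cov[gaussianRotation X Y (θ + Real.pi / 2) b, gaussianRotation X Y θ b; P]
      - 2 * cov[gaussianRotation X Y (θ + Real.pi / 2) a, gaussianRotation X Y θ b; P] := by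
    have h_var_ab := h_var a b
    rw [variance_fun_sub (hX a).memLp_two (hX b).memLp_two,
      variance_fun_sub (hY a).memLp_two (hY b).memLp_two] at h_var_ab
    have h_sin : 0 ≤ Real.sin θ := Real.sin_nonneg_of_nonneg_of_le_pi hθ.1
      (hθ.2.trans (by linarith [Real.pi_pos]))
    have h_cos : 0 ≤ Real.cos θ := Real.cos_nonneg_of_neg_pi_div_two_le_of_le
      (by linarith [hθ.1, Real.pi_pos]) hθ.2
    simp only [covariance_gaussianRotation (fun a => (hX a).memLp_two)
      (fun a => (hY a).memLp_two) h_cross, Real.cos_add_pi_div_two,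
      Real.sin_add_pi_div_two, covariance_self (hX _).aemeasurable,
      covariance_self (hY _).aemeasurable]
    linarith [mul_nonneg (mul_nonneg h_sin h_cos) (sub_nonneg.2 h_var_ab)]
  exact integral_nonneg fun ω => mul_nonneg one_half_pos.le <| sum_nonneg fun a _ =>
    sum_nonneg fun b _ => mul_nonneg
      (mul_nonneg (softmax_nonneg _ a) (softmax_nonneg _ b)) (h_increment a b)

theorem integral_logSumExp_le_of_hasGaussianLaw_prodMk
    (hXY : HasGaussianLaw (fun ω => ((fun a => X a ω), fun a => Y a ω)) P)
    (hX_mean : ∀ a, P[X a] = 0) (hY_mean : ∀ a, P[Y a] = 0) (h_cross : ∀ a b, cov[X a, Y b; P] = 0)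
    (h_var : ∀ a b, Var[fun ω => X a ω - X b ω; P] ≤ Var[fun ω => Y a ω - Y b ω; P]) :
    ∫ ω, logSumExp (fun a => X a ω) ∂P ≤ ∫ ω, logSumExp (fun a => Y a ω) ∂P := by
  have := hXY.isProbabilityMeasure
  have h_deriv := hasDerivAt_integral_logSumExp_gaussianRotation
    (fun a => (hXY.fst.eval a).integrable) (fun a => (hXY.snd.eval a).integrable)
  have h_mono : MonotoneOn
      (fun θ => ∫ ω, logSumExp (fun a => gaussianRotation X Y θ a ω) ∂P)
      (Set.Icc 0 (Real.pi / 2)) := by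
    refine monotoneOn_of_deriv_nonneg (convex_Icc _ _)
      (fun θ _ => (h_deriv θ).continuousAt.continuousWithinAt)
      (fun θ _ => (h_deriv θ).differentiableAt.differentiableWithinAt) fun θ hθ => ?_
    rw [(h_deriv θ).deriv]
    exact integral_gibbsMean_gaussianRotation_nonneg hXY hX_mean hY_mean h_cross h_var
      (interior_subset hθ)
  simpa [gaussianRotation] using h_mono (Set.left_mem_Icc.2 Real.pi_div_two_pos.le)
    (Set.right_mem_Icc.2 Real.pi_div_two_pos.le) Real.pi_div_two_pos.le

end GaussianComparison

section SudakovFernique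

variable {Ω Ω' : Type*} {mΩ : MeasurableSpace Ω} {mΩ' : MeasurableSpace Ω'} {P : Measure Ω}
  {Q : Measure Ω'} {S : Type*} {X : S → Ω → ℝ} {Y : S → Ω' → ℝ}

theorem hasGaussianLaw_comp_fst_prodMk_comp_snd [Finite S]
    (hX : HasGaussianLaw (fun ω a => X a ω) P)
    (hY : HasGaussianLaw (fun ω a => Y a ω) Q) :
    HasGaussianLaw (fun p => ((fun a => X a p.1), fun a => Y a p.2)) (P.prod Q) := by
  have := Fintype.ofFinite S
  have := hX.isProbabilityMeasure
  have := hY.isProbabilityMeasure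
  have := hX.isGaussian_map
  have := hY.isGaussian_map
  have hX_fst : HasLaw (fun p : Ω × Ω' => fun a => X a p.1) (P.map fun ω a => X a ω) (P.prod Q) :=
    HasLaw.fun_comp ⟨hX.aemeasurable, rfl⟩ measurePreserving_fst.hasLaw
  have hY_snd : HasLaw (fun p : Ω × Ω' => fun a => Y a p.2) (Q.map fun ω a => Y a ω) (P.prod Q) :=
    HasLaw.fun_comp ⟨hY.aemeasurable, rfl⟩ measurePreserving_snd.hasLaw
  exact (indepFun_prod₀ hX.aemeasurable hY.aemeasurable).hasGaussianLaw
    hX_fst.hasGaussianLaw hY_snd.hasGaussianLaw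

variable [Nonempty S]

theorem integrable_iSup [Finite S] (hX : ∀ a, Integrable (X a) P) :
    Integrable (fun ω => ⨆ a, X a ω) P := by
  have := Fintype.ofFinite S
  exact (integrable_finsetSum univ fun a _ => (hX a).abs).mono'
    (AEMeasurable.iSup fun a => (hX a).aemeasurable).aestronglyMeasurable
    (ae_of_all _ fun _ => abs_iSup_le_sum_abs _)

theorem integral_logSumExp_le_of_variance_sub_le [Fintype S]
    (hX : HasGaussianLaw (fun ω a => X a ω) P) (hY : HasGaussianLaw (fun ω a => Y a ω) Q)
    (hX_mean : ∀ a, P[X a] = 0) (hY_mean : ∀ a, Q[Y a] = 0)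
    (h_var : ∀ a b, Var[fun ω => X a ω - X b ω; P] ≤ Var[fun ω => Y a ω - Y b ω; Q]) :
    ∫ ω, logSumExp (fun a => X a ω) ∂P ≤ ∫ ω, logSumExp (fun a => Y a ω) ∂Q := by
  have := hX.isProbabilityMeasure
  have := hY.isProbabilityMeasure
  have h_fst (f : Ω → ℝ) : ∫ p, f p.1 ∂P.prod Q = ∫ ω, f ω ∂P := by
    simpa using integral_fun_fst (ν := Q) f
  have h_snd (f : Ω' → ℝ) : ∫ p, f p.2 ∂P.prod Q = ∫ ω, f ω ∂Q := by
    simpa using integral_fun_snd (μ := P) f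
  have hX_memLp (a : S) := (hX.eval a).memLp_two
  have hY_memLp (a : S) := (hY.eval a).memLp_two
  have h_prod := integral_logSumExp_le_of_hasGaussianLaw_prodMk
    (hasGaussianLaw_comp_fst_prodMk_comp_snd hX hY)
    (fun a => (h_fst (X a)).trans (hX_mean a)) (fun a => (h_snd (Y a)).trans (hY_mean a))
    (fun a b => covariance_fst_snd_prod (hX_memLp a) (hY_memLp b)) fun a b => by
      have h_fst_var := (measurePreserving_fst (ν := Q)).variance_fun_comp
        ((hX_memLp a).sub (hX_memLp b)).aemeasurable
      have h_snd_var := (measurePreserving_snd (μ := P)).variance_fun_comp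
        ((hY_memLp a).sub (hY_memLp b)).aemeasurable
      exact h_fst_var.trans_le ((h_var a b).trans_eq h_snd_var.symm)
  rwa [h_fst fun ω => logSumExp fun a => X a ω, h_snd fun ω => logSumExp fun a => Y a ω] at h_prod

theorem mul_integral_iSup_le_mul_integral_iSup_add_log_card [Fintype S]
    (hX : HasGaussianLaw (fun ω a => X a ω) P) (hY : HasGaussianLaw (fun ω a => Y a ω) Q)
    (hX_mean : ∀ a, P[X a] = 0) (hY_mean : ∀ a, Q[Y a] = 0)
    (h_var : ∀ a b, Var[fun ω => X a ω - X b ω; P] ≤ Var[fun ω => Y a ω - Y b ω; Q])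
    {β : ℝ} (hβ : 0 ≤ β) :
    β * ∫ ω, ⨆ a, X a ω ∂P ≤ β * ∫ ω, ⨆ a, Y a ω ∂Q + Real.log (Fintype.card S) := by
  have := hX.isProbabilityMeasure
  have := hY.isProbabilityMeasure
  have hβX : HasGaussianLaw (fun ω a => β * X a ω) P := hX.fun_smul β
  have hβY : HasGaussianLaw (fun ω a => β * Y a ω) Q := hY.fun_smul β
  have hβX_int (a : S) := (hβX.eval a).integrable
  have hβY_int (a : S) := (hβY.eval a).integrable
  calc β * ∫ ω, ⨆ a, X a ω ∂P = ∫ ω, ⨆ a, β * X a ω ∂P := by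
        simp only [← Real.mul_iSup_of_nonneg hβ, integral_const_mul]
    _ ≤ ∫ ω, logSumExp (fun a => β * X a ω) ∂P :=
        integral_mono (integrable_iSup hβX_int) (integrable_logSumExp hβX_int)
          fun ω => iSup_le_logSumExp _
    _ ≤ ∫ ω, logSumExp (fun a => β * Y a ω) ∂Q := by
        refine integral_logSumExp_le_of_variance_sub_le hβX hβY ?_ ?_ fun a b => ?_
        · simp only [integral_const_mul, hX_mean, mul_zero, implies_true]
        · simp only [integral_const_mul, hY_mean, mul_zero, implies_true]
        · simp only [← mul_sub, variance_const_mul]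
          exact mul_le_mul_of_nonneg_left (h_var a b) (sq_nonneg β)
    _ ≤ ∫ ω, ((⨆ a, β * Y a ω) + Real.log (Fintype.card S)) ∂Q :=
        integral_mono (integrable_logSumExp hβY_int)
          ((integrable_iSup hβY_int).add (integrable_const _))
          fun ω => logSumExp_le_iSup_add_log_card _
    _ = β * ∫ ω, ⨆ a, Y a ω ∂Q + Real.log (Fintype.card S) := by
        rw [integral_add (integrable_iSup hβY_int) (integrable_const _)]
        simp only [← Real.mul_iSup_of_nonneg hβ, integral_const_mul, integral_const,
          probReal_univ, one_smul]

theorem sudakov_fernique [Finite S]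
    (hX : HasGaussianLaw (fun ω a => X a ω) P) (hY : HasGaussianLaw (fun ω a => Y a ω) Q)
    (hX_mean : ∀ a, P[X a] = 0) (hY_mean : ∀ a, Q[Y a] = 0)
    (h_var : ∀ a b, Var[fun ω => X a ω - X b ω; P] ≤ Var[fun ω => Y a ω - Y b ω; Q]) :
    ∫ ω, ⨆ a, X a ω ∂P ≤ ∫ ω, ⨆ a, Y a ω ∂Q := by
  have := Fintype.ofFinite S
  by_contra! h_lt
  obtain ⟨n, hn⟩ := Archimedean.arch (Real.log (Fintype.card S) + 1) (sub_pos.2 h_lt)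
  have h_scaled := mul_integral_iSup_le_mul_integral_iSup_add_log_card hX hY hX_mean hY_mean h_var
    n.cast_nonneg
  rw [nsmul_eq_mul, mul_sub] at hn
  linarith

theorem integral_iSup_nonneg [Finite S] (hX : ∀ a, Integrable (X a) P)
    (hX_mean : ∀ a, P[X a] = 0) : 0 ≤ ∫ ω, ⨆ a, X a ω ∂P := by
  obtain ⟨a⟩ := ‹Nonempty S›
  rw [← hX_mean a]
  exact integral_mono (hX a) (integrable_iSup hX) fun ω =>
    le_ciSup (f := fun a => X a ω) (Set.finite_range _).bddAbove a

theorem integral_iSup_comp_le [Finite S] {T : Type*} [Finite T] [Nonempty T]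
    (hX : ∀ a, Integrable (X a) P) (e : T → S) :
    ∫ ω, ⨆ t, X (e t) ω ∂P ≤ ∫ ω, ⨆ a, X a ω ∂P :=
  integral_mono (integrable_iSup fun t => hX (e t)) (integrable_iSup hX) fun ω =>
    ciSup_le fun t => le_ciSup (f := fun a => X a ω) (Set.finite_range _).bddAbove (e t)

end SudakovFernique

section LinearFormsInIndependentGaussians

variable {ι : Type*} [Fintype ι] {v : ι → ℝ≥0}

/-- The joint law of independent centered Gaussian variables with variances `v`. -/
noncomputable abbrev gaussianPi (v : ι → ℝ≥0) : Measure (ι → ℝ) :=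
  Measure.pi fun i => gaussianReal 0 (v i)

theorem hasLaw_eval_gaussianPi (i : ι) :
    HasLaw (fun x => x i) (gaussianReal 0 (v i)) (gaussianPi v) :=
  (measurePreserving_eval (fun i => gaussianReal 0 (v i)) i).hasLaw

theorem hasGaussianLaw_id_gaussianPi : HasGaussianLaw (fun x : ι → ℝ => x) (gaussianPi v) :=
  iIndepFun.hasGaussianLaw (fun i => (hasLaw_eval_gaussianPi i).hasGaussianLaw)
    (iIndepFun_pi (X := fun _ => id) fun _ => aemeasurable_id)

theorem integral_clm_gaussianPi (L : (ι → ℝ) →L[ℝ] ℝ) : ∫ x, L x ∂gaussianPi v = 0 := by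
  have h_eval (i : ι) : ∫ x : ι → ℝ, x i ∂gaussianPi v = 0 :=
    (hasLaw_eval_gaussianPi i).integral_eq.trans integral_id_gaussianReal
  have h_id : ∫ x : ι → ℝ, x ∂gaussianPi v = 0 := by
    ext i
    rw [eval_integral fun i => (hasGaussianLaw_id_gaussianPi.eval i).integrable]
    exact h_eval i
  rw [L.integral_comp_comm hasGaussianLaw_id_gaussianPi.integrable, h_id, map_zero]

theorem integrable_clm_gaussianPi (L : (ι → ℝ) →L[ℝ] ℝ) : Integrable L (gaussianPi v) :=
  (hasGaussianLaw_id_gaussianPi.map_fun L).integrable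

theorem covariance_eval_gaussianPi [DecidableEq ι] (i j : ι) :
    cov[fun x => x i, fun x => x j; gaussianPi v] = if i = j then (v i : ℝ) else 0 := by
  have h_law (i : ι) := hasLaw_eval_gaussianPi (v := v) i
  split_ifs with h
  · rw [h, covariance_self (h_law j).aemeasurable, (h_law j).variance_eq, variance_id_gaussianReal]
  · exact ((iIndepFun_pi (X := fun _ => id) fun _ => aemeasurable_id).indepFun h).covariance_eq_zero
      (h_law i).hasGaussianLaw.memLp_two (h_law j).hasGaussianLaw.memLp_two

theorem integral_iSup_clm_gaussianPi_le {κ S : Type*} [Fintype κ] [Finite S] [Nonempty S]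
    {w : κ → ℝ≥0} {L : S → (ι → ℝ) →L[ℝ] ℝ} {M : S → (κ → ℝ) →L[ℝ] ℝ}
    (h_var : ∀ a b, Var[L a - L b; gaussianPi v] ≤ Var[M a - M b; gaussianPi w]) :
    ∫ x, ⨆ a, L a x ∂gaussianPi v ≤ ∫ x, ⨆ a, M a x ∂gaussianPi w := by
  have := Fintype.ofFinite S
  exact sudakov_fernique (hasGaussianLaw_id_gaussianPi.map_fun (.pi L))
    (hasGaussianLaw_id_gaussianPi.map_fun (.pi M)) (fun a => integral_clm_gaussianPi (L a))
    (fun a => integral_clm_gaussianPi (M a)) h_var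

/-- The linear form with coefficients `c`. -/
def linearForm (c : ι → ℝ) : (ι → ℝ) →L[ℝ] ℝ := ∑ i, c i • .proj i

theorem linearForm_apply (c x : ι → ℝ) : linearForm c x = c ⬝ᵥ x := by
  simp [linearForm, dotProduct]

theorem variance_linearForm (c : ι → ℝ) :
    Var[linearForm c; gaussianPi v] = ∑ i, v i * c i ^ 2 := by
  have h_sum : ⇑(linearForm c) = ∑ i, fun x : ι → ℝ => c i * x i := by
    ext x
    simp [linearForm]
  rw [h_sum,
    variance_sum_pi (X := fun i y => c i * y) fun i => (memLp_id_gaussianReal 2).const_mul _]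
  exact sum_congr rfl fun i _ => by
    rw [variance_const_mul, variance_fun_id_gaussianReal, mul_comm]

end LinearFormsInIndependentGaussians

section GOE

variable {N : ℕ}

theorem Jmat_eq_apply_min_max (ω : Fin N × Fin N → ℝ) (i j : Fin N) :
    Jmat ω i j = ω (min i j, max i j) := by
  rcases le_total i j with h | h
  · rw [Jmat, if_pos h, min_eq_left h, max_eq_right h]
  · rcases h.eq_or_lt with rfl | h'
    · simp [Jmat]
    · rw [Jmat, if_neg h'.not_ge, min_eq_right h, max_eq_left h]

theorem Jmat_comm (ω : Fin N × Fin N → ℝ) (i j : Fin N) : Jmat ω i j = Jmat ω j i := by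
  rw [Jmat_eq_apply_min_max, Jmat_eq_apply_min_max, min_comm, max_comm]

/-- The quadratic form `N^{-1/2} ∑ᵢⱼ Jᵢⱼ uᵢ uⱼ` of the GOE matrix, as a linear form in the
Gaussian sample. Both Hamiltonians are of this type. -/
noncomputable def goeForm (u : Fin N → ℝ) : (Fin N × Fin N → ℝ) →L[ℝ] ℝ :=
  (√N)⁻¹ • ∑ p : Fin N × Fin N, (u p.1 * u p.2) • .proj (min p.1 p.2, max p.1 p.2)

theorem goeForm_apply (u : Fin N → ℝ) (ω : Fin N × Fin N → ℝ) :
    goeForm u ω = (√N)⁻¹ * ∑ i, ∑ j, Jmat ω i j * u i * u j := by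
  simp [goeForm, Jmat_eq_apply_min_max, Fintype.sum_prod_type, mul_assoc, mul_comm (ω _)]

theorem covariance_Jmat (i j k l : Fin N) :
    cov[fun ω => Jmat ω i j, fun ω => Jmat ω k l; goeMeasure N]
      = (if i = k ∧ j = l then 1 else 0) + if i = l ∧ j = k then 1 else 0 := by
  simp only [Jmat_eq_apply_min_max]
  refine (covariance_eval_gaussianPi (v := fun p : Fin N × Fin N => if p.1 = p.2 then 2 else 1)
    _ _).trans ?_
  rcases le_total i j with hij | hij <;> rcases le_total k l with hkl | hkl <;>
    simp only [hij, hkl, min_eq_left, min_eq_right, max_eq_left, max_eq_right, Prod.mk.injEq,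
      apply_ite ((↑) : ℝ≥0 → ℝ), NNReal.coe_ofNat, NNReal.coe_one] <;>
    grind

theorem covariance_goeForm (u w : Fin N → ℝ) :
    cov[goeForm u, goeForm w; goeMeasure N] = 2 / N * (u ⬝ᵥ w) ^ 2 := by
  have h_memLp (p : Fin N × Fin N) (c : ℝ) :
      MemLp (fun ω => c * Jmat ω p.1 p.2) 2 (goeMeasure N) := by
    simp only [Jmat_eq_apply_min_max]
    exact (hasGaussianLaw_id_gaussianPi.eval _).memLp_two.const_mul c
  have h_sum (u : Fin N → ℝ) : ⇑(goeForm u)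
      = fun ω => (√N)⁻¹ * ∑ p : Fin N × Fin N, u p.1 * u p.2 * Jmat ω p.1 p.2 := by
    ext ω
    simp only [goeForm_apply, Fintype.sum_prod_type, mul_assoc, mul_comm (Jmat ω _ _)]
  have h_sqrt : (√N)⁻¹ * (√N)⁻¹ = (N : ℝ)⁻¹ := by
    rw [← mul_inv, Real.mul_self_sqrt N.cast_nonneg]
  have h_square : ∑ i, ∑ j, w i * w j * (u i * u j) = (u ⬝ᵥ w) ^ 2 := by
    rw [dotProduct_comm, sq, dotProduct, sum_mul_sum]
    exact sum_congr rfl fun i _ => sum_congr rfl fun j _ => mul_mul_mul_comm _ _ _ _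
  have h_square_swap : ∑ i, ∑ j, w j * w i * (u i * u j) = (u ⬝ᵥ w) ^ 2 := by
    rw [← h_square]
    exact sum_congr rfl fun i _ => sum_congr rfl fun j _ => by rw [mul_comm (w j)]
  have : IsProbabilityMeasure (goeMeasure N) := hasGaussianLaw_id_gaussianPi.isProbabilityMeasure
  rw [h_sum, h_sum, covariance_const_mul_left, covariance_const_mul_right,
    covariance_fun_sum_fun_sum (fun p => h_memLp p _) fun p => h_memLp p _, ← mul_assoc, h_sqrt]
  simp only [covariance_const_mul_left, covariance_const_mul_right, covariance_Jmat, mul_add,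
    sum_add_distrib, Fintype.sum_prod_type, ite_and, mul_ite, mul_one, mul_zero, sum_ite_irrel,
    sum_ite_eq, mem_univ, if_true, sum_const_zero]
  rw [h_square, h_square_swap]
  ring

theorem variance_goeForm_sub (u w : Fin N → ℝ) :
    Var[goeForm u - goeForm w; goeMeasure N]
      = 2 / N * ((u ⬝ᵥ u) ^ 2 + (w ⬝ᵥ w) ^ 2 - 2 * (u ⬝ᵥ w) ^ 2) := by
  have h_memLp (u : Fin N → ℝ) : MemLp (goeForm u) 2 (goeMeasure N) :=
    (hasGaussianLaw_id_gaussianPi.map_fun (goeForm u)).memLp_two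
  have : IsProbabilityMeasure (goeMeasure N) := hasGaussianLaw_id_gaussianPi.isProbabilityMeasure
  rw [FunLike.coe_sub, variance_sub (h_memLp u) (h_memLp w),
    ← covariance_self (h_memLp u).aemeasurable, ← covariance_self (h_memLp w).aemeasurable]
  simp only [covariance_goeForm]
  ring

theorem H0_eq_goeForm (ω : Fin N × Fin N → ℝ) (σ : Fin N → Bool) :
    H0 ω σ = goeForm (spin ∘ σ) ω :=
  (goeForm_apply _ _).symm

theorem H1_eq_goeForm (α : ℚ) (ω : Fin N × Fin N → ℝ) (σ : Fin N → Bool) :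
    H1 α ω σ = goeForm (fun i => spin (σ i) - (2 * α - 1)) ω := by
  have h_row : ∑ i, gvec ω i * spin (σ i) = (√N)⁻¹ * ∑ i, ∑ j, Jmat ω i j * spin (σ i) := by
    simp only [gvec, mul_assoc, sum_mul, mul_sum]
  have h_col : ∑ i, ∑ j, Jmat ω i j * spin (σ j) = ∑ i, ∑ j, Jmat ω i j * spin (σ i) := by
    rw [sum_comm]
    simp only [Jmat_comm ω]
  have h_expand (i j : Fin N) :
      Jmat ω i j * (spin (σ i) - (2 * α - 1)) * (spin (σ j) - (2 * α - 1))
        = Jmat ω i j * spin (σ i) * spin (σ j) - (2 * α - 1) * (Jmat ω i j * spin (σ i))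
          - (2 * α - 1) * (Jmat ω i j * spin (σ j)) + (2 * α - 1) ^ 2 * Jmat ω i j := by
    ring
  rw [H1, h_row, H0, goeForm_apply]
  simp only [h_expand, sum_add_distrib, sum_sub_distrib, ← mul_sum, h_col]
  ring

end GOE

section SpinConfigurations

variable {ι : Type*} [Fintype ι]

theorem spin_mul_self (b : Bool) : spin b * spin b = 1 := by
  cases b <;> simp [spin]

theorem spin_not (b : Bool) : spin (!b) = -spin b := by
  cases b <;> simp [spin]

theorem abs_spin (b : Bool) : |spin b| = 1 := by
  cases b <;> simp [spin]

theorem spin_comp_dotProduct_self (s : ι → Bool) : spin ∘ s ⬝ᵥ spin ∘ s = Fintype.card ι := by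
  simp [dotProduct, spin_mul_self]

theorem abs_spin_comp_dotProduct_le (s t : ι → Bool) :
    |spin ∘ s ⬝ᵥ spin ∘ t| ≤ Fintype.card ι := by
  refine (abs_sum_le_sum_abs _ _).trans_eq ?_
  simp [abs_mul, abs_spin]

theorem iSup_linearForm_spin_comp (z : ι → ℝ) :
    ⨆ s : ι → Bool, linearForm (spin ∘ s) z = ∑ i, |z i| := by
  simp only [linearForm_apply]
  refine le_antisymm (ciSup_le fun s => sum_le_sum fun i _ => ?_) ?_
  · refine (le_abs_self _).trans_eq ?_
    rw [Function.comp_apply, abs_mul, abs_spin, one_mul]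
  · refine le_ciSup_of_le (Set.finite_range _).bddAbove (fun i => decide (0 ≤ z i)) ?_
    refine sum_le_sum fun i _ => ?_
    rcases le_or_gt 0 (z i) with h | h
    · simp [spin, h, abs_of_nonneg]
    · simp [spin, h.not_ge, abs_of_neg h]

/-- The mean `E|z|` of a standard Gaussian variable `z`. -/
noncomputable def gaussianAbsMean : ℝ := ∫ x, |x| ∂gaussianReal 0 1

theorem gaussianAbsMean_pos : 0 < gaussianAbsMean := by
  have h_support : Function.support (fun x : ℝ => |x|) = {0}ᶜ := by
    ext x
    simp
  have := nullSingletonClass_gaussianReal (μ := 0) one_ne_zero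
  have h_integrable : Integrable (fun x : ℝ => |x|) (gaussianReal 0 1) :=
    ((memLp_id_gaussianReal 1).integrable le_rfl).abs
  rw [gaussianAbsMean, integral_pos_iff_support_of_nonneg abs_nonneg h_integrable, h_support,
    prob_compl_eq_one_sub (measurableSet_singleton 0), measure_singleton]
  simp

theorem integral_iSup_smul_linearForm_spin_comp {c : ℝ} (hc : 0 ≤ c) :
    ∫ z, ⨆ s : ι → Bool, (c • linearForm (spin ∘ s)) z ∂gaussianPi (1 : ι → ℝ≥0)
      = c * Fintype.card ι * gaussianAbsMean := by
  have h_eval (i : ι) : ∫ z : ι → ℝ, |z i| ∂gaussianPi 1 = gaussianAbsMean :=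
    (hasLaw_eval_gaussianPi i).integral_comp (f := fun x => |x|) (by fun_prop)
  simp only [FunLike.coe_smul, Pi.smul_apply, smul_eq_mul, ← Real.mul_iSup_of_nonneg hc,
    iSup_linearForm_spin_comp]
  rw [integral_const_mul,
    integral_finsetSum _ fun i _ => (hasGaussianLaw_id_gaussianPi.eval i).integrable.abs]
  simp [h_eval, mul_assoc]

theorem variance_smul_linearForm_spin_comp_sub (c : ℝ) (s t : ι → Bool) :
    Var[c • linearForm (spin ∘ s) - c • linearForm (spin ∘ t); gaussianPi (1 : ι → ℝ≥0)]
      = 2 * c ^ 2 * (Fintype.card ι - spin ∘ s ⬝ᵥ spin ∘ t) := by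
  have h_sub : c • linearForm (spin ∘ s) - c • linearForm (spin ∘ t)
      = linearForm (c • (spin ∘ s - spin ∘ t)) := by
    ext z
    simp [linearForm_apply, sub_dotProduct, mul_sub]
  have h_expand (i : ι) :
      (c * (spin (s i) - spin (t i))) ^ 2 = 2 * c ^ 2 * (1 - spin (s i) * spin (t i)) := by
    linear_combination c ^ 2 * spin_mul_self (s i) + c ^ 2 * spin_mul_self (t i)
  rw [h_sub, variance_linearForm]
  simp [h_expand, dotProduct, ← mul_sum]

end SpinConfigurations

section Maxima

variable {N : ℕ} {α : ℚ}

theorem Emax_H0_eq :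
    Emax N α (fun ω σ => H0 ω σ)
      = ∫ ω, ⨆ σ : SNset N α, goeForm (spin ∘ σ) ω ∂goeMeasure N := by
  simp only [Emax, H0_eq_goeForm, sSup_image']

theorem Emax_H1_eq :
    Emax N α (fun ω σ => H1 α ω σ)
      = ∫ ω, ⨆ σ : SNset N α, goeForm (fun i => spin (σ.1 i) - (2 * α - 1)) ω ∂goeMeasure N := by
  simp only [Emax, H1_eq_goeForm, sSup_image']

theorem shifted_spin_dotProduct {σ τ : Fin N → Bool} (hσ : σ ∈ SNset N α) (hτ : τ ∈ SNset N α) :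
    (fun i => spin (σ i) - (2 * α - 1)) ⬝ᵥ (fun i => spin (τ i) - (2 * α - 1))
      = spin ∘ σ ⬝ᵥ spin ∘ τ - N * (2 * α - 1) ^ 2 := by
  have hσ_sum : ∑ i, spin (σ i) = N * (2 * α - 1) := hσ
  have hτ_sum : ∑ i, spin (τ i) = N * (2 * α - 1) := hτ
  simp only [dotProduct, sub_mul, mul_sub, sum_sub_distrib, ← sum_mul, ← mul_sum, hσ_sum, hτ_sum,
    sum_const, card_univ, Fintype.card_fin, nsmul_eq_mul, Function.comp_apply]
  ring

variable [Nonempty (SNset N α)]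

theorem Emax_H1_nonneg : 0 ≤ Emax N α (fun ω σ => H1 α ω σ) := by
  rw [Emax_H1_eq]
  exact integral_iSup_nonneg (fun _ => integrable_clm_gaussianPi _)
    fun _ => integral_clm_gaussianPi _

theorem Emax_H0_le (hN : 0 < N) : Emax N α (fun ω σ => H0 ω σ) ≤ 2 * N * gaussianAbsMean := by
  have h_var (σ τ : SNset N α) :
      Var[goeForm (spin ∘ σ.1) - goeForm (spin ∘ τ.1); goeMeasure N]
        ≤ Var[(2 : ℝ) • linearForm (spin ∘ σ.1) - (2 : ℝ) • linearForm (spin ∘ τ.1);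
            gaussianPi (1 : Fin N → ℝ≥0)] := by
    rw [variance_smul_linearForm_spin_comp_sub, variance_goeForm_sub, spin_comp_dotProduct_self,
      spin_comp_dotProduct_self, Fintype.card_fin]
    set r := spin ∘ σ.1 ⬝ᵥ spin ∘ τ.1
    have h_gap : 2 * 2 ^ 2 * (N - r) - 2 / N * ((N : ℝ) ^ 2 + N ^ 2 - 2 * r ^ 2)
        = 4 / N * (N - r) ^ 2 := by
      field_simp
      ring
    rw [← sub_nonneg, h_gap]
    positivity
  calc Emax N α (fun ω σ => H0 ω σ)
      ≤ ∫ z, ⨆ σ : SNset N α, ((2 : ℝ) • linearForm (spin ∘ σ.1)) z ∂gaussianPi 1 :=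
        Emax_H0_eq.trans_le (integral_iSup_clm_gaussianPi_le h_var)
    _ ≤ ∫ z, ⨆ s : Fin N → Bool, ((2 : ℝ) • linearForm (spin ∘ s)) z ∂gaussianPi 1 :=
        integral_iSup_comp_le (X := fun (s : Fin N → Bool) z => ((2 : ℝ) • linearForm (spin ∘ s)) z)
          (fun _ => integrable_clm_gaussianPi _) Subtype.val
    _ = 2 * N * gaussianAbsMean := by
        rw [integral_iSup_smul_linearForm_spin_comp zero_le_two, Fintype.card_fin]

theorem Emax_H1_le (hα₀ : 0 ≤ α) (hα₁ : α ≤ 1) :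
    Emax N α (fun ω σ => H1 α ω σ) ≤ √(4 * α * (1 - α)) * Emax N α (fun ω σ => H0 ω σ) := by
  set q := √(4 * α * (1 - α))
  have hq₀ : 0 ≤ q := Real.sqrt_nonneg _
  have hq : q ^ 2 = 1 - (2 * α - 1) ^ 2 := by
    rw [Real.sq_sqrt (by norm_cast; nlinarith)]
    ring
  have h_var (σ τ : SNset N α) :
      Var[goeForm (fun i => spin (σ.1 i) - (2 * α - 1)) -
          goeForm (fun i => spin (τ.1 i) - (2 * α - 1)); goeMeasure N]
        ≤ Var[q • goeForm (spin ∘ σ.1) - q • goeForm (spin ∘ τ.1); goeMeasure N] := by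
    have h_smul := smul_sub q (goeForm (spin ∘ σ.1)) (goeForm (spin ∘ τ.1))
    rw [← h_smul, FunLike.coe_smul, variance_smul, hq, variance_goeForm_sub,
      variance_goeForm_sub]
    simp only [shifted_spin_dotProduct σ.2 σ.2, shifted_spin_dotProduct τ.2 τ.2,
      shifted_spin_dotProduct σ.2 τ.2, spin_comp_dotProduct_self, Fintype.card_fin]
    set r := spin ∘ σ.1 ⬝ᵥ spin ∘ τ.1
    set m : ℝ := 2 * α - 1
    have h_nonneg : 0 ≤ 4 / N * (m * (N - r)) ^ 2 := by positivity
    linear_combination h_nonneg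
  calc Emax N α (fun ω σ => H1 α ω σ)
      ≤ ∫ ω, ⨆ σ : SNset N α, (q • goeForm (spin ∘ σ.1)) ω ∂goeMeasure N :=
        Emax_H1_eq.trans_le (integral_iSup_clm_gaussianPi_le h_var)
    _ = q * Emax N α (fun ω σ => H0 ω σ) := by
        simp only [Emax_H0_eq, FunLike.coe_smul, Pi.smul_apply, smul_eq_mul,
          ← Real.mul_iSup_of_nonneg hq₀, integral_const_mul]

end Maxima

section PairedConfigurations

variable {k l : ℕ} {α : ℚ}

/-- The configuration `(s, -s, -1, …, -1)`. It belongs to `S_N(α)` when `k = αN`, and overlaps of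
such configurations are affine functions of those of the `s`. -/
def pairedConfig (l : ℕ) (s : Fin k → Bool) : Fin (k + (k + l)) → Bool :=
  Fin.append s (Fin.append (fun i => !s i) fun _ => false)

theorem pairedConfig_mem_SNset (hα : α * (k + (k + l) : ℕ) = k) (s : Fin k → Bool) :
    pairedConfig l s ∈ SNset (k + (k + l)) α := by
  have hα_real : (α : ℝ) * (k + (k + l) : ℕ) = k := by exact_mod_cast hα
  change ∑ i, spin (pairedConfig l s i) = _
  simp only [Fin.sum_univ_add, pairedConfig, Fin.append_left, Fin.append_right, spin_not,
    sum_neg_distrib, sum_const, card_univ, Fintype.card_fin]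
  simp only [spin, Bool.false_eq_true, if_false, nsmul_eq_mul]
  push_cast at hα_real ⊢
  linear_combination -2 * hα_real

theorem spin_comp_pairedConfig_dotProduct (s t : Fin k → Bool) :
    spin ∘ pairedConfig l s ⬝ᵥ spin ∘ pairedConfig l t = 2 * (spin ∘ s ⬝ᵥ spin ∘ t) + l := by
  simp only [dotProduct, Function.comp_apply, Fin.sum_univ_add, pairedConfig, Fin.append_left,
    Fin.append_right, spin_not, neg_mul_neg, spin_mul_self, sum_const, card_univ, Fintype.card_fin,
    nsmul_eq_mul, mul_one]
  ring

theorem variance_goeForm_pairedConfig_sub (s t : Fin k → Bool) :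
    Var[goeForm (spin ∘ pairedConfig l s) - goeForm (spin ∘ pairedConfig l t);
        goeMeasure (k + (k + l))]
      = 16 / (k + (k + l) : ℕ) * ((k - spin ∘ s ⬝ᵥ spin ∘ t) * (k + spin ∘ s ⬝ᵥ spin ∘ t + l)) := by
  rw [variance_goeForm_sub]
  simp only [spin_comp_pairedConfig_dotProduct, spin_comp_dotProduct_self, Fintype.card_fin]
  push_cast
  ring

theorem le_Emax_H0 (hN : 0 < k + (k + l)) (hα : α * (k + (k + l) : ℕ) = k) (hα_le : α ≤ 1 / 2) :
    √(8 * (1 - 2 * α)) * k * gaussianAbsMean ≤ Emax (k + (k + l)) α fun ω σ => H0 ω σ := by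
  set N := k + (k + l)
  set c := √(8 * (1 - 2 * α))
  have h_mem := pairedConfig_mem_SNset hα
  have : Nonempty (SNset N α) := ⟨⟨_, h_mem fun _ => false⟩⟩
  have hc : c ^ 2 = 8 * l / N := by
    have hα_real : (α : ℝ) * N = k := by exact_mod_cast hα
    have hα_le_real : (α : ℝ) ≤ 1 / 2 := by simpa using (Rat.cast_le (K := ℝ)).2 hα_le
    have hN_eq : (N : ℝ) = k + (k + l) := by simp [N]
    rw [Real.sq_sqrt (by linarith), eq_div_iff (by positivity)]
    linear_combination 8 * hN_eq - 16 * hα_real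
  have h_var (s t : Fin k → Bool) :
      Var[c • linearForm (spin ∘ s) - c • linearForm (spin ∘ t); gaussianPi (1 : Fin k → ℝ≥0)]
        ≤ Var[goeForm (spin ∘ pairedConfig l s) - goeForm (spin ∘ pairedConfig l t);
            goeMeasure N] := by
    obtain ⟨h_lower, h_upper⟩ := abs_le.1 (abs_spin_comp_dotProduct_le s t)
    rw [Fintype.card_fin] at h_lower h_upper
    rw [variance_smul_linearForm_spin_comp_sub, variance_goeForm_pairedConfig_sub, hc,
      Fintype.card_fin]
    set r := spin ∘ s ⬝ᵥ spin ∘ t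
    have h_nonneg : 0 ≤ 16 / N * ((k - r) * (k + r)) :=
      mul_nonneg (by positivity) (mul_nonneg (by linarith) (by linarith))
    linear_combination h_nonneg
  calc c * k * gaussianAbsMean
      = ∫ z, ⨆ s : Fin k → Bool, (c • linearForm (spin ∘ s)) z ∂gaussianPi 1 := by
        rw [integral_iSup_smul_linearForm_spin_comp (Real.sqrt_nonneg _), Fintype.card_fin]
    _ ≤ ∫ ω, ⨆ s : Fin k → Bool, goeForm (spin ∘ pairedConfig l s) ω ∂goeMeasure N :=
        integral_iSup_clm_gaussianPi_le h_var
    _ ≤ ∫ ω, ⨆ σ : SNset N α, goeForm (spin ∘ σ) ω ∂goeMeasure N :=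
        integral_iSup_comp_le (X := fun (σ : SNset N α) ω => goeForm (spin ∘ σ.1) ω)
          (fun _ => integrable_clm_gaussianPi _) fun s => ⟨pairedConfig l s, h_mem s⟩
    _ = Emax N α (fun ω σ => H0 ω σ) := Emax_H0_eq.symm

end PairedConfigurations

section Gap

variable {N : ℕ} {α : ℚ}

theorem exists_eq_add_of_alphaIntegral (hα : α ≤ 1 / 2) (hN : alphaIntegral α N) :
    ∃ k l : ℕ, N = k + (k + l) ∧ α * (k + (k + l) : ℕ) = k := by
  obtain ⟨k, hk⟩ := hN
  have h_le : 2 * k ≤ N := by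
    have : (2 : ℚ) * k ≤ N := by nlinarith [N.cast_nonneg (α := ℚ)]
    exact_mod_cast this
  obtain ⟨l, rfl⟩ := Nat.exists_eq_add_of_le h_le
  rw [two_mul, add_assoc] at hk ⊢
  exact ⟨k, l, rfl, hk⟩

/-- A lower bound for the difference of the normalized expected maxima. -/
noncomputable def gapConstant (α : ℚ) : ℝ :=
  (1 - √(4 * α * (1 - α))) * (√(8 * (1 - 2 * α)) * α * gaussianAbsMean)

theorem sqrt_four_mul_mul_one_sub_lt_one (hα : α < 1 / 2) : √(4 * α * (1 - α) : ℝ) < 1 := by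
  have hα_real : (α : ℝ) < 1 / 2 := by simpa using (Rat.cast_lt (K := ℝ)).2 hα
  rw [Real.sqrt_lt' one_pos]
  nlinarith

theorem gapConstant_pos (hα₀ : 0 < α) (hα : α < 1 / 2) : 0 < gapConstant α := by
  have hα₀_real : (0 : ℝ) < α := Rat.cast_pos.2 hα₀
  have hα_real : (α : ℝ) < 1 / 2 := by simpa using (Rat.cast_lt (K := ℝ)).2 hα
  have h_sqrt : 0 < √(8 * (1 - 2 * α) : ℝ) := Real.sqrt_pos.2 (by linarith)
  exact mul_pos (sub_pos.2 (sqrt_four_mul_mul_one_sub_lt_one hα))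
    (mul_pos (mul_pos h_sqrt hα₀_real) gaussianAbsMean_pos)

theorem inv_mul_Emax_sub_mem_Icc (hα₀ : 0 ≤ α) (hα : α < 1 / 2) (hN : 0 < N)
    (hαN : alphaIntegral α N) :
    (N : ℝ)⁻¹ * (Emax N α (fun ω σ => H0 ω σ) - Emax N α (fun ω σ => H1 α ω σ))
      ∈ Set.Icc (gapConstant α) (2 * gaussianAbsMean) := by
  obtain ⟨k, l, rfl, hk⟩ := exists_eq_add_of_alphaIntegral hα.le hαN
  have : Nonempty (SNset (k + (k + l)) α) := ⟨⟨_, pairedConfig_mem_SNset hk fun _ => false⟩⟩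
  have hk_real : (α : ℝ) * (k + (k + l) : ℕ) = k := by exact_mod_cast hk
  have h_H0_lower := le_Emax_H0 hN hk hα.le
  have h_H0_upper := Emax_H0_le (α := α) hN
  have h_H1_lower := Emax_H1_nonneg (N := k + (k + l)) (α := α)
  have h_H1_upper := Emax_H1_le (N := k + (k + l)) hα₀ (by linarith)
  have h_sqrt := sqrt_four_mul_mul_one_sub_lt_one hα
  rw [← hk_real] at h_H0_lower
  set n : ℝ := ((k + (k + l) : ℕ) : ℝ)
  have hn : 0 < n := Nat.cast_pos.2 hN
  rw [Set.mem_Icc, le_inv_mul_iff₀ hn, inv_mul_le_iff₀ hn, gapConstant]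
  constructor
  · have := mul_le_mul_of_nonneg_left h_H0_lower (sub_nonneg.2 h_sqrt.le)
    linarith
  · linarith

theorem neBot_atTop_inf_principal_alphaIntegral (hα : 0 ≤ α) :
    (Filter.atTop ⊓ Filter.principal {N | alphaIntegral α N}).NeBot := by
  rw [← Filter.frequently_mem_iff_neBot, Filter.frequently_atTop]
  refine fun a => ⟨α.den * a, Nat.le_mul_of_pos_left a α.den_pos, α.num.toNat * a, ?_⟩
  have h_num : ((α.num.toNat : ℤ) : ℚ) = α.num := by
    rw [Int.toNat_of_nonneg (Rat.num_nonneg.2 hα)]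
  push_cast at h_num ⊢
  rw [h_num, ← mul_assoc, Rat.mul_den_eq_num]

end Gap

/-- For every rational `α ∈ (0,1/2)` there is a constant `C₀(α) > 0` with
`liminf_{N→∞} (1/N)(E[max_{σ∈S_N(α)} H_0(σ)] − E[max_{σ∈S_N(α)} H_1(σ)]) > C₀(α)`,
where the liminf is over integers `N` with `αN` an integer. -/
theorem statement7 (α : ℚ) (hα0 : 0 < α) (hα : α < 1 / 2) :
    ∃ C₀ : ℝ, 0 < C₀ ∧
      C₀ < Filter.liminf (fun N : ℕ =>
              ((N : ℝ))⁻¹ * (Emax N α (fun ω σ => H0 ω σ) - Emax N α (fun ω σ => H1 α ω σ)))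
            (Filter.atTop ⊓ Filter.principal {N | alphaIntegral α N}) := by
  have h_pos := gapConstant_pos hα0 hα
  have h_bounds : ∀ᶠ N : ℕ in Filter.atTop ⊓ Filter.principal {N | alphaIntegral α N},
      (N : ℝ)⁻¹ * (Emax N α (fun ω σ => H0 ω σ) - Emax N α (fun ω σ => H1 α ω σ))
        ∈ Set.Icc (gapConstant α) (2 * gaussianAbsMean) := by
    rw [Filter.eventually_inf_principal]
    filter_upwards [Filter.eventually_gt_atTop 0] with N hN hαN
    exact inv_mul_Emax_sub_mem_Icc hα0.le hα hN hαN
  have := neBot_atTop_inf_principal_alphaIntegral hα0.le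
  have h_bdd : Filter.IsBoundedUnder (· ≤ ·)
      (Filter.atTop ⊓ Filter.principal {N | alphaIntegral α N}) fun N : ℕ =>
        (N : ℝ)⁻¹ * (Emax N α (fun ω σ => H0 ω σ) - Emax N α (fun ω σ => H1 α ω σ)) :=
    Filter.isBoundedUnder_of_eventually_le (h_bounds.mono fun _ h => h.2)
  exact ⟨gapConstant α / 2, half_pos h_pos, (half_lt_self h_pos).trans_le <|
    Filter.le_liminf_of_le h_bdd.isCoboundedUnder_ge (h_bounds.mono fun _ h => h.1)⟩
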